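/- Let K be a ℤ-graded module over a field k of characteristic zero and let δ be a graded endomorphism of K of odd degree. Let F and G be homogeneous graded endomorphisms of K whose graded commutator vanishes, [F,G] = 0. Then the derived brackets satisfy the symmetry relation [[F,δ],G] = (−1)^{|F|+|G|+|F||G|} [[G,δ],F], where [·,·] denotes the graded commutator. -/

import Mathlib

/-- `F` is a graded endomorphism of degree `d` with respect to the grading `𝒜`. -/
def IsGradedEnd {k K : Type*} [Field k] [AddCommGroup K] [Module k K]
    (𝒜 : ℤ → Submodule k K) (F : Module.End k K) (d : ℤ) : Prop :=
  ∀ i : ℤ, (𝒜 i).map F ≤ 𝒜 (i + d)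

/-- The graded commutator `[x,y] = x*y - (-1)^{i j} y*x` of elements `x, y`
of degrees `i, j` in an associative ring. -/
def gcomm {A : Type*} [Ring A] (x y : A) (i j : ℤ) : A :=
  x * y - ((Int.negOnePow (i * j)) : ℤ) • (y * x)

/-!
The graded commutator makes any associative ring satisfy a graded Leibniz rule and graded
skew-symmetry. When `[F,G] = 0`, the Leibniz rule gives `[[F,δ],G] = [F,[δ,G]]`, and reversing both
brackets on the right turns this into a multiple of `[[G,δ],F]`. The two reversals contribute the
sign `(-1)^{|G||δ|} (-1)^{|F|(|G| + |δ|)}`, which is `(-1)^{|F| + |G| + |F||G|}` for odd `|δ|`.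
-/

theorem negOnePow_mul_of_odd_right (n : ℤ) {d : ℤ} (hd : Odd d) :
    (n * d).negOnePow = n.negOnePow := by
  rw [Int.negOnePow_eq_iff]
  simpa [mul_sub] using (hd.sub_odd odd_one).mul_left n

section

variable {A : Type*} [Ring A]

theorem gcomm_zero_right (x : A) (i j : ℤ) : gcomm x 0 i j = 0 := by
  simp [gcomm]

theorem gcomm_zsmul_right (n : ℤ) (x y : A) (i j : ℤ) :
    gcomm x (n • y) i j = n • gcomm x y i j := by
  simp only [gcomm, mul_smul_comm, smul_mul_assoc, smul_sub, smul_comm n]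

theorem gcomm_skew (x y : A) (i j : ℤ) :
    gcomm x y i j = -((i * j).negOnePow : ℤ) • gcomm y x j i := by
  have sign_sq := Int.units_coe_mul_self (i * j).negOnePow
  simp only [gcomm, mul_comm j i]
  linear_combination (norm := module) -sign_sq • (x * y)

theorem gcomm_leibniz (x y z : A) (i j l : ℤ) :
    gcomm x (gcomm y z j l) i (j + l) =
      gcomm (gcomm x y i j) z (i + j) l +
        ((i * j).negOnePow : ℤ) • gcomm y (gcomm x z i l) j (i + l) := by
  have sign_sq := Int.units_coe_mul_self (i * j).negOnePow
  simp only [gcomm, mul_add, add_mul, Int.negOnePow_add, Units.val_mul, mul_comm j i, mul_sub,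
    sub_mul, mul_smul_comm, smul_mul_assoc, mul_assoc]
  -- The sides differ only in the terms `xzy` and `zxy`, by the factor `((-1)^{ij})^2` on the right.
  linear_combination (norm := module)
    sign_sq • ((j * l).negOnePow : ℤ) • (x * (z * y) - ((i * l).negOnePow : ℤ) • (z * (x * y)))

theorem derived_bracket_symmetry_general (δ : A) (d : ℤ) {x y : A} {i j : ℤ}
    (hxy : gcomm x y i j = 0) :
    gcomm (gcomm x δ i d) y (i + d) j =
      (((i + j) * d + i * j).negOnePow : ℤ) • gcomm (gcomm y δ j d) x (j + d) i := by
  calc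
    gcomm (gcomm x δ i d) y (i + d) j = gcomm x (gcomm δ y d j) i (d + j) := by
      rw [gcomm_leibniz, hxy, gcomm_zero_right, smul_zero, add_zero]
    _ = -((d * j).negOnePow : ℤ) • gcomm x (gcomm y δ j d) i (j + d) := by
      rw [gcomm_skew δ y, gcomm_zsmul_right, add_comm d j]
    _ = (((d * j).negOnePow : ℤ) * (i * (j + d)).negOnePow) •
          gcomm (gcomm y δ j d) x (j + d) i := by
      rw [gcomm_skew x, smul_smul, neg_mul_neg]
    _ = (((i + j) * d + i * j).negOnePow : ℤ) • gcomm (gcomm y δ j d) x (j + d) i := by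
      rw [← Units.val_mul, ← Int.negOnePow_add]
      congr 3
      ring

end

/-- if `δ` is a graded endomorphism of odd degree and `F, G` are
homogeneous graded endomorphisms whose graded commutator vanishes, then
`[[F,δ],G] = (-1)^{|F| + |G| + |F||G|} [[G,δ],F]`. -/
theorem derived_bracket_symmetry
    (k : Type*) [Field k] [CharZero k]
    (K : Type*) [AddCommGroup K] [Module k K]
    (𝒜 : ℤ → Submodule k K) (hK : DirectSum.IsInternal 𝒜)
    (δ : Module.End k K) (d : ℤ) (hδ : IsGradedEnd 𝒜 δ d) (hd : Odd d)
    (F G : Module.End k K) (i j : ℤ)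
    (hF : IsGradedEnd 𝒜 F i) (hG : IsGradedEnd 𝒜 G j)
    (hFG : gcomm F G i j = 0) :
    gcomm (gcomm F δ i d) G (i + d) j =
      ((Int.negOnePow (i + j + i * j)) : ℤ) • gcomm (gcomm G δ j d) F (j + d) i := by
  rw [derived_bracket_symmetry_general δ d hFG, Int.negOnePow_add ((i + j) * d),
    negOnePow_mul_of_odd_right (i + j) hd, ← Int.negOnePow_add]
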